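/- Let ρ be a weight on L(G), let M ≥ 1 and w ∈ ℝ, and let 1 < p < ∞. The following are equivalent: (i) for every t ≥ 0 the left translation T_t defines a bounded linear operator on L^p_ρ(L(G)), the family {T_t}_{t≥0} is a C₀-semigroup on L^p_ρ(L(G)), and ‖T_t‖ ≤ M e^{wt} for all t ≥ 0; (ii) for all i ∈ I, all t ≥ 0, and almost every s ∈ [0,1], one has (Σ_{j∈M_{n(t,s)}(i)} ρ_j(s+t−n(t,s))^{−1/(p−1)})^{p−1} ≤ M^p e^{pwt} / ρ_i(s), where the left-hand side is interpreted as 0 when M_{n(t,s)}(i) is empty. -/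

import Mathlib

open MeasureTheory ENNReal Filter

noncomputable section

variable {I : Type*}

/-- The `n`-fold iterate of the parent map `P : I → Option I` of a directed metric tree,
encoded on the set of edges `I`. -/
def pIter (P : I → Option I) : ℕ → I → Option I
  | 0, j => some j
  | n + 1, j => (P j).bind (pIter P n)

/-- `Mset P n i` is the set of edges reachable from the edge `i` in `n` steps,
i.e. `M_n(i) = {j | P^[n] j = some i}`; `Mset P 0 i = {i}`. -/
def Mset (P : I → Option I) (n : ℕ) (i : I) : Set I := {j | pIter P n j = some i}

/-- `nfl t s = ⌊s + t⌋ ∈ ℕ`. -/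
def nfl (t s : ℝ) : ℕ := ⌊s + t⌋₊

/-- The left translation `T_t` on families of functions on the edges:
`(T_t f)_i (s) = ∑_{j ∈ M_{n(t,s)}(i)} f_j (t + s - n(t,s))`. -/
def Tleft (P : I → Option I) (f : I → ℝ → ℝ) (t : ℝ) (i : I) (s : ℝ) : ℝ :=
  ∑' j : Mset P (nfl t s) i, f (j : I) (t + s - (nfl t s : ℝ))

/-- The `p`-th power of the norm of a family `f` in `L^p_ρ(L(G))`:
`‖f‖_{p,ρ}^p = ∑_{i ∈ I} ∫_0^1 |f_i(s)|^p ρ_i(s) ds`, with values in `[0,∞]`. -/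
def pnorm (ρ : I → ℝ → ℝ) (p : ℝ) (f : I → ℝ → ℝ) : ℝ≥0∞ :=
  ∑' i, ∫⁻ s in Set.Icc (0 : ℝ) 1, ENNReal.ofReal (|f i s| ^ p * ρ i s)

/-- Membership in `L^p_ρ(L(G))`: each component is (a.e.) measurable on `[0,1]` and the
`ℓ^p`-direct sum norm is finite. -/
def memLprho (ρ : I → ℝ → ℝ) (p : ℝ) (f : I → ℝ → ℝ) : Prop :=
  (∀ i, AEMeasurable (f i) (volume.restrict (Set.Icc (0 : ℝ) 1))) ∧ pnorm ρ p f < ⊤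

/-- The norm `‖f‖_{p,ρ}` in `L^p_ρ(L(G))`, with values in `[0,∞]`. -/
def enorm' (ρ : I → ℝ → ℝ) (p : ℝ) (f : I → ℝ → ℝ) : ℝ≥0∞ := pnorm ρ p f ^ (1 / p)

/-- The distance `‖f - g‖_{p,ρ}` in `L^p_ρ(L(G))`, with values in `[0,∞]`. -/
def pdist (ρ : I → ℝ → ℝ) (p : ℝ) (f g : I → ℝ → ℝ) : ℝ≥0∞ :=
  enorm' ρ p fun i s => f i s - g i s

/-- A weight on `L(G)`: a family of integrable functions on `[0,1]`, strictly positive a.e. -/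
structure IsWeight (ρ : I → ℝ → ℝ) : Prop where
  integrable : ∀ i, IntegrableOn (ρ i) (Set.Icc (0 : ℝ) 1)
  pos : ∀ i, ∀ᵐ s ∂(volume.restrict (Set.Icc (0 : ℝ) 1)), 0 < ρ i s

/-- The `1`-admissibility condition (everywhere on `[0,1]`) with constants `M, w`:
`ρ_i(s) ≤ M e^{wt} inf_{j ∈ M_{n(t,s)}(i)} ρ_j(s+t-n(t,s))`, the infimum (in `[0,∞]`)
over the empty set being `+∞`. -/
def Admissible1 (P : I → Option I) (ρ : I → ℝ → ℝ) (M w : ℝ) : Prop :=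
  ∀ i, ∀ t ≥ (0 : ℝ), ∀ s ∈ Set.Icc (0 : ℝ) 1,
    ENNReal.ofReal (ρ i s) ≤ ENNReal.ofReal (M * Real.exp (w * t)) *
      ⨅ j : Mset P (nfl t s) i, ENNReal.ofReal (ρ (j : I) (s + t - (nfl t s : ℝ)))

/-- The `p`-admissibility condition (`1 < p < ∞`, everywhere on `[0,1]`) with constants `M, w`:
`(∑_{j ∈ M_{n(t,s)}(i)} ρ_j(s+t-n(t,s))^{-1/(p-1)})^{p-1} ≤ M^p e^{pwt} / ρ_i(s)`,
the sum being taken in `[0,∞]`. -/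
def AdmissibleP (P : I → Option I) (ρ : I → ℝ → ℝ) (p M w : ℝ) : Prop :=
  ∀ i, ∀ t ≥ (0 : ℝ), ∀ s ∈ Set.Icc (0 : ℝ) 1,
    (∑' j : Mset P (nfl t s) i,
        ENNReal.ofReal ((ρ (j : I) (s + t - (nfl t s : ℝ))) ^ (-(1 / (p - 1))))) ^ (p - 1)
      ≤ ENNReal.ofReal (M ^ p * Real.exp (p * w * t) / ρ i s)

/-- `p`-admissibility, `1 ≤ p < ∞`. -/
def Admissible (P : I → Option I) (ρ : I → ℝ → ℝ) (p M w : ℝ) : Prop :=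
  (p = 1 → Admissible1 P ρ M w) ∧ (1 < p → AdmissibleP P ρ p M w)

/-- The family of left translations `{T_t}_{t ≥ 0}` consists of bounded (linear) operators on
`L^p_ρ(L(G))` with `‖T_t‖ ≤ M e^{wt}`, and is a `C₀`-semigroup there: `T_0 = Id`,
`T_{t+u} = T_t ∘ T_u`, and `t ↦ T_t f` is continuous on `[0,∞)` for every `f`
(identities and continuity taken in the `L^p_ρ`-(semi)metric). -/
def C0SemigroupBound (P : I → Option I) (ρ : I → ℝ → ℝ) (p M w : ℝ) : Prop :=
  (∀ t ≥ (0 : ℝ), ∀ f, memLprho ρ p f → memLprho ρ p (Tleft P f t)) ∧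
  (∀ t ≥ (0 : ℝ), ∀ f, memLprho ρ p f →
      enorm' ρ p (Tleft P f t) ≤ ENNReal.ofReal (M * Real.exp (w * t)) * enorm' ρ p f) ∧
  (∀ f, memLprho ρ p f → pdist ρ p (Tleft P f 0) f = 0) ∧
  (∀ t ≥ (0 : ℝ), ∀ u ≥ (0 : ℝ), ∀ f, memLprho ρ p f →
      pdist ρ p (Tleft P f (t + u)) (Tleft P (Tleft P f u) t) = 0) ∧
  (∀ f, memLprho ρ p f → ∀ t ≥ (0 : ℝ),
      Filter.Tendsto (fun u => pdist ρ p (Tleft P f u) (Tleft P f t))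
        (nhdsWithin t (Set.Ici 0)) (nhds 0))

abbrev mu0 : Measure ℝ := volume.restrict (Set.Icc (0 : ℝ) 1)

lemma mu0_mem : ∀ᵐ s ∂mu0, s ∈ Set.Icc (0 : ℝ) 1 := ae_restrict_mem measurableSet_Icc

lemma mu0_mem' : ∀ᵐ s ∂mu0, s ∈ Set.Ioo (0 : ℝ) 1 := by
  have : mu0 = volume.restrict (Set.Ioo (0 : ℝ) 1) :=
    (Measure.restrict_congr_set Ioo_ae_eq_Icc).symm
  rw [this]
  exact ae_restrict_mem measurableSet_Ioo

lemma shift_eq_fract {t s : ℝ} (ht : 0 ≤ t) (hs : 0 ≤ s) :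
    t + s - (nfl t s : ℝ) = Int.fract (t + s) := by
  unfold nfl
  rw [natCast_floor_eq_intCast_floor (by linarith), add_comm s t]
  rfl

lemma lintegral_shift (t : ℝ) (ht : 0 ≤ t) (G : ℝ → ℝ≥0∞) :
    ∫⁻ s, G (t + s - (nfl t s : ℝ)) ∂mu0 = ∫⁻ s, G s ∂mu0 := by
  have h1 : ∫⁻ s, G (t + s - (nfl t s : ℝ)) ∂mu0 = ∫⁻ s, G (Int.fract (t + s)) ∂mu0 := by
    refine lintegral_congr_ae ?_
    filter_upwards [mu0_mem] with s hs
    rw [shift_eq_fract ht hs.1]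
  have h2 : ∫⁻ s, G s ∂mu0 = ∫⁻ s, G (Int.fract s) ∂mu0 := by
    refine lintegral_congr_ae ?_
    filter_upwards [mu0_mem'] with s hs
    rw [Int.fract_eq_self.2 ⟨hs.1.le, hs.2⟩]
  have h0 : mu0 = volume.restrict (Set.Ioc (0 : ℝ) 1) :=
    (Measure.restrict_congr_set Ioc_ae_eq_Icc).symm
  rw [h1, h2, h0]
  have h3 := (isAddFundamentalDomain_Ioc (T := 1) one_pos 0 volume).setLIntegral_eq
    (isAddFundamentalDomain_Ioc (T := 1) one_pos t volume) (fun s => G (Int.fract s)) (by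
      rintro ⟨g, hg⟩ x
      obtain ⟨k, rfl⟩ := AddSubgroup.mem_zmultiples_iff.1 hg
      simp [AddSubgroup.vadd_def])
  rw [zero_add] at h3
  rw [h3]
  rw [← lintegral_indicator measurableSet_Ioc, ← lintegral_indicator measurableSet_Ioc]
  rw [← lintegral_add_left_eq_self (fun s => (Set.Ioc t (t + 1)).indicator
    (fun s => G (Int.fract s)) s) t]
  congr 1
  ext s
  simp [Set.indicator_apply]

lemma measurable_nfl (t : ℝ) : Measurable (nfl t) := by
  unfold nfl
  exact Nat.measurable_floor.comp (measurable_id.add_const t)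

lemma measurable_sh (t : ℝ) : Measurable (fun s => t + s - (nfl t s : ℝ)) :=
  (measurable_id.const_add t).sub (measurable_from_top.comp (measurable_nfl t))

lemma ae_shift (t : ℝ) (ht : 0 ≤ t) {Q : ℝ → Prop} (h : ∀ᵐ s ∂mu0, Q s) :
    ∀ᵐ s ∂mu0, Q (t + s - (nfl t s : ℝ)) := by
  set N := toMeasurable mu0 {s | ¬ Q s}
  have hN : mu0 N = 0 := by rw [measure_toMeasurable]; exact h
  have hNm : MeasurableSet N := measurableSet_toMeasurable _ _
  have h1 := lintegral_shift t ht (N.indicator 1)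
  rw [lintegral_indicator_one hNm, hN] at h1
  have h2 := (lintegral_eq_zero_iff
    ((measurable_one.indicator hNm).comp (measurable_sh t))).1 h1
  filter_upwards [h2] with s hs
  by_contra hQ
  have : (t + s - (nfl t s : ℝ)) ∈ N := subset_toMeasurable _ _ hQ
  simp [this] at hs

lemma ofReal_term (p : ℝ) (hp : 0 < p) (a r : ℝ) :
    ENNReal.ofReal (|a| ^ p * r) = ENNReal.ofReal |a| ^ p * ENNReal.ofReal r := by
  rw [ENNReal.ofReal_mul (by positivity), ENNReal.ofReal_rpow_of_nonneg (abs_nonneg a) hp.le]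

lemma holder_pt {ι : Type*} (p : ℝ) (hp : 1 < p) (a r : ι → ℝ) (hr : ∀ j, 0 < r j) :
    (∑' j, ENNReal.ofReal |a j|) ^ p ≤
      (∑' j, ENNReal.ofReal (|a j| ^ p * r j)) *
        (∑' j, ENNReal.ofReal ((r j) ^ (-(1 / (p - 1))))) ^ (p - 1) := by
  have hp0 : 0 < p := by linarith
  have hp1 : 0 < p - 1 := by linarith
  have hpq := Real.HolderConjugate.conjExponent hp
  set q := Real.conjExponent p with hq
  have hq' : q = p / (p - 1) := rfl
  rw [← ENNReal.le_rpow_inv_iff hp0, ENNReal.tsum_eq_iSup_sum]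
  refine iSup_le fun s => ?_
  have key := ENNReal.inner_le_Lp_mul_Lq s (fun j => ENNReal.ofReal (|a j| * r j ^ (1/p)))
    (fun j => ENNReal.ofReal (r j ^ (-(1/p)))) hpq
  have e1 : ∀ j, ENNReal.ofReal (|a j| * r j ^ (1/p)) * ENNReal.ofReal (r j ^ (-(1/p))) =
      ENNReal.ofReal |a j| := by
    intro j
    rw [← ENNReal.ofReal_mul (by have := hr j; positivity), mul_assoc, ← Real.rpow_add (hr j)]
    simp
  have e2 : ∀ j, ENNReal.ofReal (|a j| * r j ^ (1/p)) ^ p = ENNReal.ofReal (|a j| ^ p * r j) := by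
    intro j
    have := hr j
    rw [ENNReal.ofReal_rpow_of_nonneg (by positivity) hp0.le,
      Real.mul_rpow (by positivity) (by positivity), ← Real.rpow_mul this.le]
    congr 3
    rw [one_div_mul_cancel hp0.ne', Real.rpow_one]
  have e3 : ∀ j, ENNReal.ofReal (r j ^ (-(1/p))) ^ q =
      ENNReal.ofReal ((r j) ^ (-(1 / (p - 1)))) := by
    intro j
    have := hr j
    rw [ENNReal.ofReal_rpow_of_nonneg (by positivity) hpq.symm.nonneg, ← Real.rpow_mul this.le]
    congr 2
    rw [hq']; field_simp
  simp only [e1, e2, e3] at key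
  refine key.trans ?_
  rw [ENNReal.mul_rpow_of_nonneg _ _ (by positivity), ← ENNReal.rpow_mul, one_div]
  have e4 : (p - 1) * p⁻¹ = 1 / q := by rw [hq']; field_simp
  rw [e4]
  gcongr
  · exact ENNReal.sum_le_tsum _
  · have := hpq.symm.pos; positivity
  · exact ENNReal.sum_le_tsum _

lemma pIter_add (P : I → Option I) (n m : ℕ) (l : I) :
    pIter P (n + m) l = (pIter P m l).bind (pIter P n) := by
  induction m generalizing l with
  | zero => simp [pIter]
  | succ m ih =>
    rw [← add_assoc]
    simp only [pIter]
    rw [Option.bind_assoc]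
    congr 1
    ext1 x
    exact ih x

def msetEquiv (P : I → Option I) (n m : ℕ) (i : I) :
    (Σ j : Mset P n i, Mset P m (j : I)) ≃ Mset P (n + m) i :=
  Equiv.ofBijective (fun x => ⟨x.2.1, by
    have h1 : pIter P m x.2.1 = some x.1.1 := x.2.2
    have h2 : pIter P n x.1.1 = some i := x.1.2
    simp [Mset, pIter_add, h1, h2]⟩) (by
    constructor
    · rintro ⟨⟨j, hj⟩, ⟨l, hl⟩⟩ ⟨⟨j', hj'⟩, ⟨l', hl'⟩⟩ h
      simp only [Subtype.mk.injEq] at h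
      subst h
      have : j = j' := by
        have h1 : pIter P m l = some j := hl
        have h2 : pIter P m l = some j' := hl'
        simpa [h1] using h2
      subst this
      rfl
    · rintro ⟨l, hl⟩
      have h1 : pIter P (n + m) l = some i := hl
      rw [pIter_add, Option.bind_eq_some_iff] at h1
      obtain ⟨j, h1, h2⟩ := h1
      exact ⟨⟨⟨j, h2⟩, ⟨l, h1⟩⟩, rfl⟩)

lemma msetEquiv_coe (P : I → Option I) (n m : ℕ) (i : I)
    (x : Σ j : Mset P n i, Mset P m (j : I)) : (msetEquiv P n m i x : I) = x.2 := rfl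

lemma tsum_mset_le (P : I → Option I) (n : ℕ) (g : I → ℝ≥0∞) :
    ∑' i, ∑' j : Mset P n i, g j ≤ ∑' j, g j := by
  rw [← ENNReal.tsum_sigma (f := fun (i : I) (j : Mset P n i) => g j)]
  refine ENNReal.tsum_comp_le_tsum_of_injective (f := fun x : (Σ i : I, Mset P n i) => (x.2 : I))
    ?_ g
  rintro ⟨i, ⟨j, hj⟩⟩ ⟨i', ⟨j', hj'⟩⟩ h
  simp only at h
  subst h
  have : i = i' := by
    have h1 : pIter P n j = some i := hj
    have h2 : pIter P n j = some i' := hj'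
    simpa [h1] using h2
  subst this
  rfl

lemma tsum_lintegral_le {α ι : Type*} [MeasurableSpace α] (μ : Measure α) (f : ι → α → ℝ≥0∞) :
    ∑' i, ∫⁻ a, f i a ∂μ ≤ ∫⁻ a, ∑' i, f i a ∂μ := by
  rw [ENNReal.tsum_eq_iSup_sum]
  refine iSup_le fun s => ?_
  have : ∑ i ∈ s, ∫⁻ a, f i a ∂μ ≤ ∫⁻ a, ∑ i ∈ s, f i a ∂μ := by
    classical
    induction s using Finset.induction_on with
    | empty => simp
    | insert i s hi ih =>
      simp only [Finset.sum_insert hi]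
      exact (add_le_add le_rfl ih).trans (le_lintegral_add _ _)
  exact this.trans (lintegral_mono fun a => ENNReal.sum_le_tsum _)

structure Good (ρ : I → ℝ → ℝ) : Prop where
  meas : ∀ i, Measurable (ρ i)
  pos : ∀ i s, 0 < ρ i s
  int : ∀ i, IntegrableOn (ρ i) (Set.Icc (0 : ℝ) 1)

def Cond (P : I → Option I) (ρ : I → ℝ → ℝ) (p C t : ℝ) : Prop :=
  ∀ i, ∀ᵐ s ∂mu0,
    (∑' j : Mset P (nfl t s) i,
      ENNReal.ofReal ((ρ (j : I) (t + s - (nfl t s : ℝ))) ^ (-(1 / (p - 1))))) ^ (p - 1)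
      ≤ ENNReal.ofReal (C / ρ i s)

lemma pt_bound {P : I → Option I} {ρ : I → ℝ → ℝ} (hg : Good ρ) {p C t : ℝ} (hp : 1 < p)
    (hC : Cond P ρ p C t) (f : I → ℝ → ℝ) (i : I) :
    ∀ᵐ s ∂mu0, (∑' j : Mset P (nfl t s) i,
        ENNReal.ofReal |f j (t + s - (nfl t s : ℝ))|) ^ p * ENNReal.ofReal (ρ i s) ≤
      ENNReal.ofReal C * ∑' j : Mset P (nfl t s) i,
        ENNReal.ofReal (|f j (t + s - (nfl t s : ℝ))| ^ p * ρ j (t + s - (nfl t s : ℝ))) := by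
  filter_upwards [hC i] with s hs
  have h := holder_pt p hp (fun j : Mset P (nfl t s) i => f j (t + s - (nfl t s : ℝ)))
    (fun j => ρ j (t + s - (nfl t s : ℝ))) (fun j => hg.pos _ _)
  have hpos := hg.pos i s
  calc _ ≤ ((∑' j : Mset P (nfl t s) i,
        ENNReal.ofReal (|f j (t + s - (nfl t s : ℝ))| ^ p * ρ j (t + s - (nfl t s : ℝ)))) *
          ENNReal.ofReal (C / ρ i s)) * ENNReal.ofReal (ρ i s) := by
        gcongr
        exact h.trans (by gcongr)
    _ = _ := by
        rw [mul_assoc, ← ENNReal.ofReal_mul' hpos.le, div_mul_cancel₀ _ hpos.ne', mul_comm]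

lemma abs_tsum_le {ι : Type*} (a : ι → ℝ) :
    ENNReal.ofReal |∑' j, a j| ≤ ∑' j, ENNReal.ofReal |a j| := by
  have := enorm_tsum_le_tsum_enorm (f := a)
  simpa [Real.enorm_eq_ofReal_abs] using this

lemma aem_term [Countable I] {ρ : I → ℝ → ℝ} (hg : Good ρ) {p : ℝ} {f : I → ℝ → ℝ}
    (hf : ∀ i, AEMeasurable (f i) mu0) (i : I) :
    AEMeasurable (fun s => ENNReal.ofReal (|f i s| ^ p * ρ i s)) mu0 := by
  have h1 := hf i
  have h2 := hg.meas i
  have h3 : AEMeasurable (fun s => |f i s|) mu0 := by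
    simpa only [Real.norm_eq_abs] using h1.norm
  exact ((h3.pow_const p).mul h2.aemeasurable).ennreal_ofReal

lemma pnorm_eq [Countable I] {ρ : I → ℝ → ℝ} (hg : Good ρ) {p : ℝ} {f : I → ℝ → ℝ}
    (hf : ∀ i, AEMeasurable (f i) mu0) :
    pnorm ρ p f = ∫⁻ s, ∑' i, ENNReal.ofReal (|f i s| ^ p * ρ i s) ∂mu0 :=
  (lintegral_tsum (fun i => aem_term hg hf i)).symm

lemma pnorm_T_le [Countable I] {P : I → Option I} {ρ : I → ℝ → ℝ} (hg : Good ρ) {p C t : ℝ}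
    (hp : 1 < p) (ht : 0 ≤ t) (hC : Cond P ρ p C t) {f : I → ℝ → ℝ}
    (hf : ∀ i, AEMeasurable (f i) mu0) :
    pnorm ρ p (Tleft P f t) ≤ ENNReal.ofReal C * pnorm ρ p f := by
  have h1 : pnorm ρ p (Tleft P f t) ≤ ∑' i, ∫⁻ s, ENNReal.ofReal C * ∑' j : Mset P (nfl t s) i,
        ENNReal.ofReal (|f j (t + s - (nfl t s : ℝ))| ^ p * ρ j (t + s - (nfl t s : ℝ))) ∂mu0 := by
    unfold pnorm
    refine ENNReal.tsum_le_tsum fun i => lintegral_mono_ae ?_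
    filter_upwards [pt_bound hg hp hC f i] with s hs
    refine le_trans ?_ hs
    rw [ofReal_term p (by linarith)]
    gcongr
    exact abs_tsum_le _
  refine h1.trans ((tsum_lintegral_le _ _).trans ?_)
  simp only [ENNReal.tsum_mul_left]
  rw [lintegral_const_mul' _ _ ENNReal.ofReal_ne_top]
  gcongr
  rw [pnorm_eq hg hf, ← lintegral_shift t ht (fun s => ∑' i, ENNReal.ofReal (|f i s| ^ p * ρ i s))]
  exact lintegral_mono fun s => tsum_mset_le P (nfl t s)
    (fun j => ENNReal.ofReal (|f j (t + s - (nfl t s : ℝ))| ^ p * ρ j (t + s - (nfl t s : ℝ))))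

lemma ae_summable [Countable I] {P : I → Option I} {ρ : I → ℝ → ℝ} (hg : Good ρ) {p C t : ℝ}
    (hp : 1 < p) (ht : 0 ≤ t) (hC : Cond P ρ p C t) {f : I → ℝ → ℝ}
    (hf : memLprho ρ p f) (i : I) :
    ∀ᵐ s ∂mu0, Summable (fun j : Mset P (nfl t s) i => f j (t + s - (nfl t s : ℝ))) := by
  have h1 : ∀ᵐ s ∂mu0, ∑' i, ENNReal.ofReal (|f i s| ^ p * ρ i s) < ⊤ := by
    refine ae_lt_top' (AEMeasurable.tsum fun i => aem_term hg hf.1 i) ?_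
    rw [← pnorm_eq hg hf.1]; exact hf.2.ne
  filter_upwards [ae_shift t ht h1, pt_bound hg hp hC f i] with s hs h2
  have h3 : ∑' j : Mset P (nfl t s) i,
        ENNReal.ofReal (|f j (t + s - (nfl t s : ℝ))| ^ p * ρ j (t + s - (nfl t s : ℝ))) < ⊤ :=
    lt_of_le_of_lt (ENNReal.tsum_comp_le_tsum_of_injective Subtype.val_injective
      (fun j => ENNReal.ofReal (|f j (t + s - (nfl t s : ℝ))| ^ p *
        ρ j (t + s - (nfl t s : ℝ))))) hs
  have h4 := h2.trans_lt (ENNReal.mul_lt_top ENNReal.ofReal_lt_top h3)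
  have h5 : ∑' j : Mset P (nfl t s) i, ENNReal.ofReal |f j (t + s - (nfl t s : ℝ))| ≠ ⊤ := by
    intro h
    rw [h, ENNReal.top_rpow_of_pos (by linarith), ENNReal.top_mul] at h4
    · exact lt_irrefl _ h4
    · simpa using hg.pos i s
  have h6 := ENNReal.summable_toReal h5
  simp only [ENNReal.toReal_ofReal (abs_nonneg _)] at h6
  exact h6.of_abs

lemma aem_T [Countable I] {P : I → Option I} {ρ : I → ℝ → ℝ} (hg : Good ρ) {p C t : ℝ}
    (hp : 1 < p) (ht : 0 ≤ t) (hC : Cond P ρ p C t) {f : I → ℝ → ℝ}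
    (hf : memLprho ρ p f) (i : I) : AEMeasurable (Tleft P f t i) mu0 := by
  classical
  refine aemeasurable_of_tendsto_metrizable_ae (ι := Finset I) atTop (f := fun F s =>
    ∑ j ∈ F, (Mset P (nfl t s) i).indicator (fun j => f j (t + s - (nfl t s : ℝ))) j) ?_ ?_
  · intro F
    refine Finset.aemeasurable_fun_sum _ fun j _ => ?_
    refine ⟨fun s => {s | j ∈ Mset P (nfl t s) i}.indicator
      (fun s => (hf.1 j).mk _ (t + s - (nfl t s : ℝ))) s, ?_, ?_⟩
    · refine Measurable.indicator ((hf.1 j).measurable_mk.comp (measurable_sh t)) ?_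
      exact (measurable_nfl t) (t := {n | j ∈ Mset P n i}) trivial
    · filter_upwards [ae_shift t ht (hf.1 j).ae_eq_mk] with s hs
      simp only [Set.indicator_apply, Set.mem_ofPred_eq, hs]
  · filter_upwards [ae_summable hg hp ht hC hf i] with s hs
    have : Tleft P f t i s = ∑' j, (Mset P (nfl t s) i).indicator
        (fun j => f j (t + s - (nfl t s : ℝ))) j := 
      tsum_subtype (Mset P (nfl t s) i) (fun j => f j (t + s - (nfl t s : ℝ)))
    rw [this]
    exact (summable_subtype_iff_indicator.1 hs).hasSum

lemma mem_T [Countable I] {P : I → Option I} {ρ : I → ℝ → ℝ} (hg : Good ρ) {p C t : ℝ}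
    (hp : 1 < p) (ht : 0 ≤ t) (hC : Cond P ρ p C t) {f : I → ℝ → ℝ}
    (hf : memLprho ρ p f) : memLprho ρ p (Tleft P f t) :=
  ⟨aem_T hg hp ht hC hf, (pnorm_T_le hg hp ht hC hf.1).trans_lt
    (ENNReal.mul_lt_top ENNReal.ofReal_lt_top hf.2)⟩

lemma T_sub [Countable I] {P : I → Option I} {ρ : I → ℝ → ℝ} (hg : Good ρ) {p C t : ℝ}
    (hp : 1 < p) (ht : 0 ≤ t) (hC : Cond P ρ p C t) {f g : I → ℝ → ℝ}
    (hf : memLprho ρ p f) (hg' : memLprho ρ p g) (i : I) :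
    ∀ᵐ s ∂mu0, Tleft P (fun i s => f i s - g i s) t i s = Tleft P f t i s - Tleft P g t i s := by
  filter_upwards [ae_summable hg hp ht hC hf i, ae_summable hg hp ht hC hg' i] with s h1 h2
  exact h1.tsum_sub h2

lemma T_zero (P : I → Option I) (f : I → ℝ → ℝ) (i : I) :
    ∀ᵐ s ∂mu0, Tleft P f 0 i s = f i s := by
  filter_upwards [mu0_mem'] with s hs
  have h0 : nfl 0 s = 0 := by
    unfold nfl
    rw [add_zero, Nat.floor_eq_zero]; exact hs.2
  unfold Tleft
  rw [h0]
  have h1 : Mset P 0 i = {i} := by ext j; simp [Mset, pIter]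
  rw [h1, tsum_subtype ({i} : Set I) (fun j => f j (0 + s - ((0 : ℕ) : ℝ)))]
  rw [tsum_eq_single i]
  · simp
  · intro j hj; simp [hj]

lemma T_add [Countable I] {P : I → Option I} {ρ : I → ℝ → ℝ} (hg : Good ρ) {p C t u : ℝ}
    (hp : 1 < p) (ht : 0 ≤ t) (hu : 0 ≤ u) (hC : Cond P ρ p C (t + u)) {f : I → ℝ → ℝ}
    (hf : memLprho ρ p f) (i : I) :
    ∀ᵐ s ∂mu0, Tleft P f (t + u) i s = Tleft P (Tleft P f u) t i s := by
  filter_upwards [ae_summable hg hp (by linarith) hC hf i, mu0_mem] with s h1 hs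
  have hx : t + s - (nfl t s : ℝ) = Int.fract (t + s) := shift_eq_fract ht hs.1
  have hx0 : 0 ≤ t + s - (nfl t s : ℝ) := by rw [hx]; exact Int.fract_nonneg _
  have hn : nfl (t + u) s = nfl t s + nfl u (t + s - (nfl t s : ℝ)) := by
    have : s + (t + u) = (t + s - (nfl t s : ℝ)) + u + (nfl t s : ℕ) := by ring
    unfold nfl at this ⊢
    rw [this, Nat.floor_add_natCast, add_comm]
    unfold nfl at hx0
    linarith
  unfold Tleft
  have hy : u + (t + s - (nfl t s : ℝ)) - (nfl u (t + s - (nfl t s : ℝ)) : ℝ)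
    = t + u + s - (nfl (t + u) s : ℝ) := by rw [hn]; push_cast; ring
  rw [hy]
  set y := t + u + s - (nfl (t + u) s : ℝ)
  rw [hn] at h1 ⊢
  have h2 := (msetEquiv P (nfl t s) (nfl u (t + s - (nfl t s : ℝ))) i).summable_iff.2 h1
  rw [← (msetEquiv P (nfl t s) (nfl u (t + s - (nfl t s : ℝ))) i).tsum_eq]
  exact h2.tsum_sigma

lemma pnorm_congr {ρ : I → ℝ → ℝ} {p : ℝ} {f g : I → ℝ → ℝ}
    (h : ∀ i, ∀ᵐ s ∂mu0, f i s = g i s) : pnorm ρ p f = pnorm ρ p g := by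
  unfold pnorm
  refine tsum_congr fun i => lintegral_congr_ae ?_
  filter_upwards [h i] with s hs
  rw [hs]

lemma pnorm_sub_comm {ρ : I → ℝ → ℝ} {p : ℝ} (f g : I → ℝ → ℝ) :
    pnorm ρ p (fun i s => f i s - g i s) = pnorm ρ p (fun i s => g i s - f i s) := by
  unfold pnorm
  simp only [abs_sub_comm]

lemma pnorm_zero' {ρ : I → ℝ → ℝ} {p : ℝ} (hp : 1 < p) {f g : I → ℝ → ℝ}
    (h : ∀ i, ∀ᵐ s ∂mu0, f i s = g i s) : pnorm ρ p (fun i s => f i s - g i s) = 0 := by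
  rw [pnorm_congr (g := fun _ _ => 0)]
  · have : p ≠ 0 := by linarith
    simp [pnorm, Real.zero_rpow this]
  · intro i
    filter_upwards [h i] with s hs
    rw [hs, sub_self]

lemma pt_tri {p : ℝ} (hp : 1 < p) (a b c r : ℝ) :
    ENNReal.ofReal (|a - c| ^ p * r) ≤
      2 ^ (p - 1) * (ENNReal.ofReal (|a - b| ^ p * r) + ENNReal.ofReal (|b - c| ^ p * r)) := by
  have hp0 : 0 < p := by linarith
  rw [ofReal_term p hp0, ofReal_term p hp0, ofReal_term p hp0, ← add_mul, ← mul_assoc]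
  gcongr
  refine le_trans ?_ (ENNReal.rpow_add_le_mul_rpow_add_rpow _ _ hp.le)
  rw [← ENNReal.ofReal_add (abs_nonneg _) (abs_nonneg _)]
  gcongr
  exact abs_sub_le a b c

lemma two_rpow_ne_top (p : ℝ) : (2 : ℝ≥0∞) ^ p ≠ ⊤ :=
  ENNReal.rpow_ne_top_of_ne_zero (by simp) (by simp)

lemma pnorm_tri [Countable I] {ρ : I → ℝ → ℝ} (hg : Good ρ) {p : ℝ} (hp : 1 < p)
    {f g : I → ℝ → ℝ} (h : I → ℝ → ℝ)
    (hf : ∀ i, AEMeasurable (f i) mu0) (hg' : ∀ i, AEMeasurable (g i) mu0) :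
    pnorm ρ p (fun i s => f i s - h i s) ≤ 2 ^ (p - 1) *
      (pnorm ρ p (fun i s => f i s - g i s) + pnorm ρ p (fun i s => g i s - h i s)) := by
  unfold pnorm
  rw [← ENNReal.tsum_add, ← ENNReal.tsum_mul_left]
  refine ENNReal.tsum_le_tsum fun i => ?_
  rw [← lintegral_add_left' (aem_term hg (f := fun i s => f i s - g i s)
    (fun i => (hf i).sub (hg' i)) i), ← lintegral_const_mul' _ _ (two_rpow_ne_top _)]
  exact lintegral_mono fun s => pt_tri hp _ _ _ _

lemma mem_sub [Countable I] {ρ : I → ℝ → ℝ} (hg : Good ρ) {p : ℝ} (hp : 1 < p)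
    {f g : I → ℝ → ℝ} (hf : memLprho ρ p f) (hg' : memLprho ρ p g) :
    memLprho ρ p (fun i s => f i s - g i s) := by
  refine ⟨fun i => (hf.1 i).sub (hg'.1 i), ?_⟩
  have := pnorm_tri hg hp (f := f) (g := fun _ _ => 0) g hf.1 (fun i => aemeasurable_const)
  refine this.trans_lt (ENNReal.mul_lt_top (two_rpow_ne_top _).lt_top (ENNReal.add_lt_top.2 ⟨?_, ?_⟩))
  · simpa using hf.2
  · rw [pnorm_sub_comm]; simpa using hg'.2

/-- density on one edge -/
lemma dens {r : ℝ → ℝ} (hm : Measurable r) (hpos : ∀ s, 0 < r s)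
    (hint : IntegrableOn r (Set.Icc (0 : ℝ) 1)) {p : ℝ} (hp : 1 < p) {f : ℝ → ℝ}
    (hf : AEMeasurable f mu0) (hfin : ∫⁻ s, ENNReal.ofReal (|f s| ^ p * r s) ∂mu0 < ⊤)
    {ε : ℝ≥0∞} (hε : ε ≠ 0) (_hεt : ε ≠ ⊤) :
    ∃ φ : ℝ → ℝ, Continuous φ ∧ (∃ B, ∀ x, |φ x| ≤ B) ∧
      (∃ δ > 0, ∀ x, φ x ≠ 0 → δ ≤ x ∧ x < 1) ∧
      ∫⁻ s, ENNReal.ofReal (|f s - φ s| ^ p * r s) ∂mu0 ≤ ε := by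
  have hp0 : 0 < p := by linarith
  have hrfin : ∫⁻ s, ENNReal.ofReal (r s) ∂mu0 < ⊤ := hint.lintegral_lt_top
  set ν := mu0.withDensity (fun s => ENNReal.ofReal (r s)) with hν
  have : IsFiniteMeasure ν := isFiniteMeasure_withDensity hrfin.ne
  have habs : ν ≪ mu0 := withDensity_absolutelyContinuous _ _
  have hrw : ∀ h : ℝ → ℝ, AEMeasurable h mu0 →
      ∫⁻ s, ‖h s‖ₑ ^ p ∂ν = ∫⁻ s, ENNReal.ofReal (|h s| ^ p * r s) ∂mu0 := by
    intro h hh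
    rw [hν, lintegral_withDensity_eq_lintegral_mul₀ hm.ennreal_ofReal.aemeasurable
      (hh.enorm.pow_const p)]
    refine lintegral_congr fun s => ?_
    rw [ofReal_term p hp0, Pi.mul_apply, Real.enorm_eq_ofReal_abs, mul_comm]
  have hpt : (ENNReal.ofReal p).toReal = p := ENNReal.toReal_ofReal hp0.le
  have hpne : ENNReal.ofReal p ≠ 0 := by simpa using hp0
  have hmem : MemLp f (ENNReal.ofReal p) ν := by
    refine ⟨(hf.mono_ac habs).aestronglyMeasurable, ?_⟩
    rw [eLpNorm_lt_top_iff_lintegral_rpow_enorm_lt_top hpne ENNReal.ofReal_ne_top, hpt, hrw f hf]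
    exact hfin
  set ε' : ℝ≥0∞ := 2⁻¹ * (ε / 2 ^ (p - 1)) with hε'
  have hK0 : (2 : ℝ≥0∞) ^ (p - 1) ≠ 0 := by simp [ENNReal.rpow_eq_zero_iff]
  have hε'0 : ε' ≠ 0 := mul_ne_zero (by simp) (ENNReal.div_ne_zero.2 ⟨hε, two_rpow_ne_top _⟩)
  have hε'pos : 0 < ε' := pos_iff_ne_zero.2 hε'0
  have hε'1 : ε' ^ (1 / p) ≠ 0 := by
    simp [ENNReal.rpow_eq_zero_iff, hε'0, hp0, hp0.le]
  obtain ⟨g, hgs, hgε, hgc, -⟩ := hmem.exists_hasCompactSupport_eLpNorm_sub_le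
    ENNReal.ofReal_ne_top hε'1
  rw [eLpNorm_eq_lintegral_rpow_enorm_toReal hpne ENNReal.ofReal_ne_top, hpt,
    ENNReal.rpow_le_rpow_iff (by positivity)] at hgε
  have hgm : AEMeasurable g mu0 := hgc.measurable.aemeasurable
  rw [hrw (f - g) (hf.sub hgm)] at hgε
  obtain ⟨B, hB⟩ := hgs.exists_bound_of_continuous hgc
  have hB0 : 0 ≤ B := (norm_nonneg _).trans (hB 0)
  set χ : ℕ → ℝ → ℝ := fun n x => max 0 (min 1 ((n : ℝ) * min x (1 - x) - 1)) with hχ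
  have hχc : ∀ n, Continuous (χ n) := fun n => by simp only [hχ]; fun_prop
  have hχ0 : ∀ n x, 0 ≤ χ n x := fun n x => le_max_left _ _
  have hχ1 : ∀ n x, χ n x ≤ 1 := fun n x => max_le zero_le_one (min_le_left _ _)
  have htend : Tendsto (fun n => ∫⁻ s, ENNReal.ofReal (|g s - χ n s * g s| ^ p * r s) ∂mu0)
      atTop (nhds (∫⁻ s, 0 ∂mu0)) := by
    refine tendsto_lintegral_filter_of_dominated_convergence
      (fun s => ENNReal.ofReal (B ^ p * r s)) ?_ ?_ ?_ ?_
    · refine Eventually.of_forall fun n => ?_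
      have := (hχc n).measurable
      have := hgc.measurable
      have h3 : Measurable fun s => |g s - χ n s * g s| := by
        have : Continuous fun s => |g s - χ n s * g s| := by have := hχc n; fun_prop
        exact this.measurable
      exact ((h3.pow_const p).mul hm).ennreal_ofReal
    · refine Eventually.of_forall fun n => Eventually.of_forall fun s => ?_
      have h1 := hpos s
      have h2 : |g s - χ n s * g s| ≤ B := by
        have : g s - χ n s * g s = (1 - χ n s) * g s := by ring
        rw [this, abs_mul, abs_of_nonneg (by linarith [hχ1 n s])]
        have h3 := hB s
        rw [Real.norm_eq_abs] at h3
        nlinarith [hχ0 n s, hχ1 n s, abs_nonneg (g s)]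
      gcongr
    · have : ∀ s, ENNReal.ofReal (B ^ p * r s) = ENNReal.ofReal (B ^ p) * ENNReal.ofReal (r s) :=
        fun s => ENNReal.ofReal_mul (by positivity)
      simp only [this]
      rw [lintegral_const_mul' _ _ ENNReal.ofReal_ne_top]
      exact (ENNReal.mul_lt_top ENNReal.ofReal_lt_top hrfin).ne
    · filter_upwards [mu0_mem'] with s hs
      refine tendsto_const_nhds.congr' ?_
      have hmin : 0 < min s (1 - s) := lt_min hs.1 (by linarith [hs.2])
      obtain ⟨N, hN⟩ := exists_nat_gt (2 / min s (1 - s))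
      filter_upwards [eventually_ge_atTop N] with n hn
      have h1 : 2 / min s (1 - s) < n := hN.trans_le (by exact_mod_cast hn)
      rw [div_lt_iff₀ hmin] at h1
      have h2 : χ n s = 1 := by
        simp only [hχ]
        rw [min_eq_left (by linarith), max_eq_right zero_le_one]
      rw [h2]
      simp [Real.zero_rpow hp0.ne']
  rw [lintegral_zero] at htend
  obtain ⟨n, hn1, hn⟩ := ((eventually_gt_atTop 0).and
    (htend.eventually (gt_mem_nhds hε'pos))).exists
  have hnpos : (0 : ℝ) < n := by exact_mod_cast hn1
  refine ⟨fun s => χ n s * g s, (hχc n).mul hgc, ⟨B, fun x => ?_⟩, ⟨1 / n, by positivity, ?_⟩, ?_⟩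
  · rw [abs_mul, abs_of_nonneg (hχ0 n x)]
    have h3 := hB x
    rw [Real.norm_eq_abs] at h3
    nlinarith [hχ0 n x, hχ1 n x, abs_nonneg (g x)]
  · intro x hx
    have h1 : χ n x ≠ 0 := left_ne_zero_of_mul hx
    have h2 : 0 < (n : ℝ) * min x (1 - x) - 1 := by
      by_contra h
      apply h1
      simp only [hχ]
      exact max_eq_left ((min_le_right _ _).trans (not_lt.1 h))
    have h3 : 1 / (n : ℝ) < min x (1 - x) := by
      rw [div_lt_iff₀ hnpos]; linarith
    have h4 : 0 < 1 / (n : ℝ) := by positivity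
    have h5 := lt_min_iff.1 h3
    exact ⟨h5.1.le, by linarith [h5.2]⟩
  · calc _ ≤ ∫⁻ s, 2 ^ (p - 1) * (ENNReal.ofReal (|f s - g s| ^ p * r s) +
          ENNReal.ofReal (|g s - χ n s * g s| ^ p * r s)) ∂mu0 :=
          lintegral_mono fun s => pt_tri hp _ _ _ _
      _ = 2 ^ (p - 1) * (∫⁻ s, ENNReal.ofReal (|f s - g s| ^ p * r s) ∂mu0 +
          ∫⁻ s, ENNReal.ofReal (|g s - χ n s * g s| ^ p * r s) ∂mu0) := by
          rw [lintegral_const_mul' _ _ (two_rpow_ne_top _), lintegral_add_left']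
          have h3 : AEMeasurable (fun s => |f s - g s|) mu0 := by
            simpa only [Real.norm_eq_abs, Pi.sub_apply] using (hf.sub hgm).norm
          exact ((h3.pow_const p).mul hm.aemeasurable).ennreal_ofReal
      _ ≤ 2 ^ (p - 1) * (ε' + ε') := by
          gcongr
          exact hgε
      _ = ε := by
          rw [hε', ← add_mul, ENNReal.inv_two_add_inv_two, one_mul,
            ENNReal.mul_div_cancel hK0 (two_rpow_ne_top _)]

/-- continuity of translation for nice functions -/
lemma nice_tendsto {r : ℝ → ℝ} (hm : Measurable r) (hpos : ∀ s, 0 < r s)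
    (hint : IntegrableOn r (Set.Icc (0 : ℝ) 1)) {p : ℝ} (hp : 1 < p) {φ : ℝ → ℝ}
    (hc : Continuous φ) (hB : ∃ B, ∀ x, |φ x| ≤ B) :
    Tendsto (fun t => ∫⁻ s, ENNReal.ofReal (|φ (t + s) - φ s| ^ p * r s) ∂mu0)
      (nhds 0) (nhds 0) := by
  have hp0 : 0 < p := by linarith
  have hrfin : ∫⁻ s, ENNReal.ofReal (r s) ∂mu0 < ⊤ := hint.lintegral_lt_top
  obtain ⟨B, hB⟩ := hB
  have hB0 : 0 ≤ B := (abs_nonneg _).trans (hB 0)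
  have : Tendsto (fun t => ∫⁻ s, ENNReal.ofReal (|φ (t + s) - φ s| ^ p * r s) ∂mu0)
      (nhds 0) (nhds (∫⁻ s, 0 ∂mu0)) := by
    refine tendsto_lintegral_filter_of_dominated_convergence
      (fun s => ENNReal.ofReal ((B + B) ^ p * r s)) ?_ ?_ ?_ ?_
    · refine Eventually.of_forall fun t => ?_
      have h3 : Measurable fun s => |φ (t + s) - φ s| := by
        have : Continuous fun s => |φ (t + s) - φ s| := by fun_prop
        exact this.measurable
      exact ((h3.pow_const p).mul hm).ennreal_ofReal
    · refine Eventually.of_forall fun n => Eventually.of_forall fun s => ?_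
      have h1 := hpos s
      have h2 : |φ (n + s) - φ s| ≤ B + B :=
        (abs_sub _ _).trans (add_le_add (hB _) (hB _))
      gcongr
    · have : ∀ s, ENNReal.ofReal ((B + B) ^ p * r s) =
          ENNReal.ofReal ((B + B) ^ p) * ENNReal.ofReal (r s) :=
        fun s => ENNReal.ofReal_mul (by positivity)
      simp only [this]
      rw [lintegral_const_mul' _ _ ENNReal.ofReal_ne_top]
      exact (ENNReal.mul_lt_top ENNReal.ofReal_lt_top hrfin).ne
    · refine Eventually.of_forall fun s => ?_
      have h1 : Continuous fun t => ENNReal.ofReal (|φ (t + s) - φ s| ^ p * r s) := by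
        refine ENNReal.continuous_ofReal.comp ((Continuous.rpow_const ?_ ?_).mul continuous_const)
        · fun_prop
        · intro _; right; exact hp0.le
      have h2 := h1.tendsto 0
      simpa [Real.zero_rpow hp0.ne'] using h2
  simpa using this

lemma tendsto_zero_of_mul {α : Type*} {l : Filter α} {F : α → ℝ≥0∞} {L : ℝ≥0∞} (hL : L ≠ ⊤)
    (h : ∀ η : ℝ≥0∞, η ≠ 0 → η ≠ ⊤ → ∀ᶠ a in l, F a ≤ L * η) : Tendsto F l (nhds 0) := by
  rw [ENNReal.tendsto_nhds_zero]
  intro ε hε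
  have hL1 : L + 1 ≠ ⊤ := ENNReal.add_ne_top.2 ⟨hL, by simp⟩
  have h1 : min 1 (ε / (L + 1)) ≠ 0 := by
    have : 0 < ε / (L + 1) := ENNReal.div_pos hε.ne' hL1
    exact (lt_min one_pos this).ne'
  filter_upwards [h (min 1 (ε / (L + 1))) h1 (ne_top_of_le_ne_top ENNReal.one_ne_top
    (min_le_left _ _))] with a ha
  calc F a ≤ L * min 1 (ε / (L + 1)) := ha
    _ ≤ (L + 1) * (ε / (L + 1)) := by
        gcongr
        · exact le_self_add
        · exact min_le_right _ _
    _ ≤ ε := ENNReal.mul_div_le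

lemma exists_approx [Countable I] {ρ : I → ℝ → ℝ} (hg : Good ρ) {p : ℝ} (hp : 1 < p)
    {f : I → ℝ → ℝ} (hf : memLprho ρ p f) {η : ℝ≥0∞} (hη : η ≠ 0) (hηt : η ≠ ⊤) :
    ∃ (F : Finset I) (g : I → ℝ → ℝ), (∀ j ∉ F, g j = 0) ∧
      (∀ j, Continuous (g j) ∧ (∃ B, ∀ x, |g j x| ≤ B) ∧
        (∃ δ > 0, ∀ x, g j x ≠ 0 → δ ≤ x ∧ x < 1)) ∧
      pnorm ρ p (fun i s => f i s - g i s) ≤ 2 * η := by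
  classical
  have h1 := ENNReal.tendsto_tsum_compl_atTop_zero hf.2.ne
  obtain ⟨F, hF⟩ := ((ENNReal.tendsto_nhds_zero.1 h1) η (pos_iff_ne_zero.2 hη)).exists
  set η' := η / ((F.card : ℝ≥0∞) + 1)
  have hη' : η' ≠ 0 := ENNReal.div_ne_zero.2 ⟨hη, by simp⟩
  have hη't : η' ≠ ⊤ := ENNReal.div_ne_top hηt (by simp)
  have h2 : ∀ j, ∫⁻ s, ENNReal.ofReal (|f j s| ^ p * ρ j s) ∂mu0 < ⊤ := fun j =>
    lt_of_le_of_lt (ENNReal.le_tsum j) hf.2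
  choose φ hφ1 hφ2 hφ3 hφ4 using fun j => dens (hg.meas j) (hg.pos j) (hg.int j) hp (hf.1 j)
    (h2 j) hη' hη't
  refine ⟨F, fun j => if j ∈ F then φ j else 0, fun j hj => if_neg hj, fun j => ?_, ?_⟩
  · by_cases hj : j ∈ F
    · simp only [hj, if_true]; exact ⟨hφ1 j, hφ2 j, hφ3 j⟩
    · simp only [hj, if_false]
      exact ⟨continuous_const, ⟨0, by simp⟩, ⟨1, one_pos, by simp⟩⟩
  · have h3 : ∀ j, ∫⁻ s, ENNReal.ofReal (|f j s - (if j ∈ F then φ j else 0) s| ^ p * ρ j s) ∂mu0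
        ≤ (if j ∈ F then η' else 0) +
          {j | j ∉ F}.indicator (fun j => ∫⁻ s, ENNReal.ofReal (|f j s| ^ p * ρ j s) ∂mu0) j := by
      intro j
      by_cases hj : j ∈ F
      · simpa [hj] using hφ4 j
      · simp [hj]
    refine (ENNReal.tsum_le_tsum h3).trans ?_
    rw [ENNReal.tsum_add, two_mul]
    refine add_le_add ?_ ?_
    · rw [tsum_eq_sum (s := F) (by intro j hj; simp [hj])]
      rw [Finset.sum_congr rfl (g := fun _ => η') (by intro j hj; simp [hj])]
      rw [Finset.sum_const, nsmul_eq_mul]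
      calc (F.card : ℝ≥0∞) * η' ≤ ((F.card : ℝ≥0∞) + 1) * η' := by gcongr; exact le_self_add
        _ ≤ η := ENNReal.mul_div_le
    · rw [← tsum_subtype]
      exact hF

lemma T_nice {P : I → Option I} {g : I → ℝ → ℝ} {t : ℝ} (ht : 0 ≤ t) (ht1 : t < 1)
    (h : ∀ j x, g j x ≠ 0 → t < x ∧ x < 1) (i : I) :
    ∀ᵐ s ∂mu0, Tleft P g t i s = g i (t + s) := by
  filter_upwards [mu0_mem'] with s hs
  by_cases h1 : s + t < 1
  · have h0 : nfl t s = 0 := by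
      unfold nfl
      rw [Nat.floor_eq_zero]; exact h1
    unfold Tleft
    rw [h0]
    have h1 : Mset P 0 i = {i} := by ext j; simp [Mset, pIter]
    rw [h1, tsum_subtype ({i} : Set I) (fun j => g j (t + s - ((0 : ℕ) : ℝ)))]
    rw [tsum_eq_single i]
    · simp
    · intro j hj; simp [hj]
  · have h0 : nfl t s = 1 := by
      unfold nfl
      rw [Nat.floor_eq_iff (by linarith [hs.1])]
      push_cast
      exact ⟨by linarith, by linarith [hs.2]⟩
    have h2 : g i (t + s) = 0 := by
      by_contra h2
      linarith [(h i _ h2).2]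
    rw [h2]
    unfold Tleft
    rw [h0]
    have h3 : ∀ j, g j (t + s - ((1 : ℕ) : ℝ)) = 0 := by
      intro j
      by_contra h2
      have := (h j _ h2).1
      push_cast at this
      linarith [hs.2]
    simp only [h3, tsum_zero]

lemma nice_cont0 [Countable I] {P : I → Option I} {ρ : I → ℝ → ℝ} (hg : Good ρ) {p : ℝ}
    (hp : 1 < p) {g : I → ℝ → ℝ} {F : Finset I} (hgF : ∀ j ∉ F, g j = 0)
    (hgn : ∀ j, Continuous (g j) ∧ (∃ B, ∀ x, |g j x| ≤ B) ∧
        (∃ δ > 0, ∀ x, g j x ≠ 0 → δ ≤ x ∧ x < 1)) :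
    Tendsto (fun t => pnorm ρ p (fun i s => Tleft P g t i s - g i s))
      (nhdsWithin 0 (Set.Ici 0)) (nhds 0) := by
  choose hc hB δ hδ hδg using hgn
  have hp0 : p ≠ 0 := by linarith
  have h1 : Tendsto (fun t => ∑ i ∈ F,
      ∫⁻ s, ENNReal.ofReal (|g i (t + s) - g i s| ^ p * ρ i s) ∂mu0) (nhds 0) (nhds 0) := by
    have := tendsto_finsetSum F (fun i _ =>
      nice_tendsto (hg.meas i) (hg.pos i) (hg.int i) hp (hc i) (hB i))
    simpa using this
  have h1' := h1.mono_left (nhdsWithin_le_nhds (s := Set.Ici (0 : ℝ)))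
  refine h1'.congr' ?_
  have h2 : ∀ᶠ t in nhdsWithin (0 : ℝ) (Set.Ici 0), t < 1 :=
    nhdsWithin_le_nhds (gt_mem_nhds one_pos)
  have h3 : ∀ᶠ t in nhdsWithin (0 : ℝ) (Set.Ici 0), ∀ j ∈ F, t < δ j :=
    (Finset.eventually_all F).2 fun j _ => nhdsWithin_le_nhds (gt_mem_nhds (hδ j))
  filter_upwards [h2, h3, self_mem_nhdsWithin] with t ht1 htF ht0
  have h4 : ∀ j x, g j x ≠ 0 → t < x ∧ x < 1 := by
    intro j x hx
    by_cases hj : j ∈ F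
    · have := hδg j x hx
      exact ⟨(htF j hj).trans_le this.1, this.2⟩
    · rw [hgF j hj] at hx; simp at hx
  rw [pnorm_congr (g := fun i s => g i (t + s) - g i s)]
  · unfold pnorm
    rw [tsum_eq_sum (s := F)]
    intro j hj
    simp [hgF j hj, Real.zero_rpow hp0]
  · intro i
    filter_upwards [T_nice (P := P) ht0 ht1 h4 i] with s hs
    rw [hs]

lemma cont0 [Countable I] {P : I → Option I} {ρ : I → ℝ → ℝ} (hg : Good ρ) {p C : ℝ}
    (hp : 1 < p) (hC : ∀ t, 0 ≤ t → t < 1 → Cond P ρ p C t) {f : I → ℝ → ℝ}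
    (hf : memLprho ρ p f) :
    Tendsto (fun t => pnorm ρ p (fun i s => Tleft P f t i s - f i s))
      (nhdsWithin 0 (Set.Ici 0)) (nhds 0) := by
  set K : ℝ≥0∞ := 2 ^ (p - 1)
  have hK : K ≠ ⊤ := two_rpow_ne_top _
  refine tendsto_zero_of_mul (L := K * (ENNReal.ofReal C * 2 + K * (1 + 2))) ?_ ?_
  · refine ENNReal.mul_ne_top hK (ENNReal.add_ne_top.2 ⟨ENNReal.mul_ne_top
      ENNReal.ofReal_ne_top (by simp), ENNReal.mul_ne_top hK (by norm_num)⟩)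
  intro η hη hηt
  obtain ⟨F, g, hgF, hgn, hfg⟩ := exists_approx hg hp hf hη hηt
  have hgm : ∀ j, AEMeasurable (g j) mu0 := fun j => (hgn j).1.measurable.aemeasurable
  have hgf : pnorm ρ p (fun i s => g i s - f i s) ≤ 2 * η := by rwa [pnorm_sub_comm]
  have hgmem : memLprho ρ p g := by
    refine ⟨hgm, ?_⟩
    have := pnorm_tri hg hp (f := g) (g := f) (fun _ _ => 0) hgm hf.1
    simp only [sub_zero] at this
    refine this.trans_lt (ENNReal.mul_lt_top hK.lt_top (ENNReal.add_lt_top.2 ⟨?_, hf.2⟩))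
    exact hgf.trans_lt (ENNReal.mul_lt_top (by simp) hηt.lt_top)
  have h2 : ∀ᶠ t in nhdsWithin (0 : ℝ) (Set.Ici 0), t < 1 :=
    nhdsWithin_le_nhds (gt_mem_nhds one_pos)
  have h3 := (ENNReal.tendsto_nhds_zero.1 (nice_cont0 (P := P) hg hp hgF hgn)) η
    (pos_iff_ne_zero.2 hη)
  filter_upwards [h2, h3, self_mem_nhdsWithin] with t ht1 htg ht0
  have hCt := hC t ht0 ht1
  have hTf := mem_T hg hp ht0 hCt hf
  have hTg := mem_T hg hp ht0 hCt hgmem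
  have e1 : pnorm ρ p (fun i s => Tleft P f t i s - Tleft P g t i s) ≤
      ENNReal.ofReal C * (2 * η) := by
    rw [← pnorm_congr (T_sub hg hp ht0 hCt hf hgmem)]
    refine (pnorm_T_le hg hp ht0 hCt (mem_sub hg hp hf hgmem).1).trans ?_
    gcongr
  calc _ ≤ K * (pnorm ρ p (fun i s => Tleft P f t i s - Tleft P g t i s) +
        pnorm ρ p (fun i s => Tleft P g t i s - f i s)) := pnorm_tri hg hp f hTf.1 hTg.1
    _ ≤ K * (ENNReal.ofReal C * (2 * η) + K * (η + 2 * η)) := by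
        gcongr
        refine (pnorm_tri hg hp f hTg.1 hgm).trans ?_
        gcongr
    _ = _ := by ring

lemma cont_all [Countable I] {P : I → Option I} {ρ : I → ℝ → ℝ} (hg : Good ρ) {p : ℝ}
    (hp : 1 < p) (hC : ∀ R : ℝ, ∃ C, ∀ t, 0 ≤ t → t < R → Cond P ρ p C t) {f : I → ℝ → ℝ}
    (hf : memLprho ρ p f) (t : ℝ) (ht : 0 ≤ t) :
    Tendsto (fun u => pnorm ρ p (fun i s => Tleft P f u i s - Tleft P f t i s))
      (nhdsWithin t (Set.Ici 0)) (nhds 0) := by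
  obtain ⟨C1, hC1⟩ := hC 1
  have h0 := cont0 hg hp hC1 hf
  obtain ⟨C, hC⟩ := hC (t + 1)
  have h1 : Tendsto (fun u : ℝ => |u - t|) (nhdsWithin t (Set.Ici 0))
      (nhdsWithin 0 (Set.Ici 0)) := by
    refine tendsto_nhdsWithin_iff.2 ⟨?_, Eventually.of_forall fun u => Set.mem_Ici.2 (abs_nonneg _)⟩
    have : Continuous fun u : ℝ => |u - t| := by fun_prop
    have := this.tendsto t
    rw [sub_self, abs_zero] at this
    exact this.mono_left nhdsWithin_le_nhds
  have h2 := ENNReal.Tendsto.const_mul (a := ENNReal.ofReal C) (h0.comp h1)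
    (Or.inr ENNReal.ofReal_ne_top)
  rw [mul_zero] at h2
  have key : ∀ a d : ℝ, 0 ≤ a → 0 ≤ d → a + d < t + 1 →
      pnorm ρ p (fun i s => Tleft P f (a + d) i s - Tleft P f a i s) ≤
        ENNReal.ofReal C * pnorm ρ p (fun i s => Tleft P f d i s - f i s) := by
    intro a d ha hd had
    have hTd := mem_T hg hp hd (hC d hd (by linarith)) hf
    have hCa := hC a ha (by linarith)
    refine le_trans (le_of_eq ?_) (pnorm_T_le hg hp ha hCa (mem_sub hg hp hTd hf).1)
    refine pnorm_congr fun i => ?_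
    filter_upwards [T_add hg hp ha hd (hC _ (by linarith) had) hf i,
      T_sub hg hp ha hCa hTd hf i] with s e1 e2
    rw [e1, e2]
  have h3 : ∀ᶠ u in nhdsWithin t (Set.Ici 0), u < t + 1 :=
    nhdsWithin_le_nhds (gt_mem_nhds (by linarith))
  refine tendsto_of_tendsto_of_tendsto_of_le_of_le' tendsto_const_nhds h2
    (Eventually.of_forall fun _ => zero_le) ?_
  filter_upwards [h3, self_mem_nhdsWithin] with u hu1 hu0
  have hu0' : 0 ≤ u := hu0
  simp only [Function.comp_apply]
  rcases le_total t u with h | h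
  · rw [abs_of_nonneg (by linarith)]
    have := key t (u - t) ht (by linarith) (by linarith)
    rwa [add_sub_cancel] at this
  · rw [abs_of_nonpos (by linarith), neg_sub]
    have := key u (t - u) hu0' (by linarith) (by linarith)
    rwa [add_sub_cancel, pnorm_sub_comm] at this

lemma core_null [Countable I] {P : I → Option I} {ρ : I → ℝ → ℝ} (hg : Good ρ) {p C t : ℝ}
    (hp : 1 < p) (hC0 : 0 ≤ C)
    (hb : ∀ f, memLprho ρ p f → pnorm ρ p (Tleft P f t) ≤ ENNReal.ofReal C * pnorm ρ p f)
    (i : I) (n : ℕ) (F : Finset I) (hF : ∀ j ∈ F, j ∈ Mset P n i) (K : ℕ) :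
    volume {s : ℝ | s ∈ Set.Icc (0 : ℝ) 1 ∧ nfl t s = n ∧
      ∑ j ∈ F, ρ j (t + s - n) ^ (-(1 / (p - 1))) ≤ K ∧
      C * ∑ j ∈ F, ρ j (t + s - n) ^ (-(1 / (p - 1))) <
        |∑ j ∈ F, ρ j (t + s - n) ^ (-(1 / (p - 1)))| ^ p * ρ i s} = 0 := by
  classical
  have hp0 : 0 < p := by linarith
  have hp1 : 0 < p - 1 := by linarith
  set τ : I → ℝ → ℝ := fun j x => ρ j x ^ (-(1 / (p - 1))) with hτ
  have hτm : ∀ j, Measurable (τ j) := fun j => (hg.meas j).pow_const _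
  have hτ0 : ∀ j x, 0 ≤ τ j x := fun j x => Real.rpow_nonneg (hg.pos j x).le _
  set σ : ℝ → ℝ := fun s => ∑ j ∈ F, τ j (t + s - n) with hσ
  have hsh : Measurable fun s : ℝ => t + s - (n : ℝ) := by fun_prop
  have hσm : Measurable σ := Finset.measurable_fun_sum _ fun j _ => (hτm j).comp hsh
  have hσ0 : ∀ s, 0 ≤ σ s := fun s => Finset.sum_nonneg fun j _ => hτ0 _ _
  have hσpm : Measurable fun s => |σ s| ^ p * ρ i s := by
    have : Measurable fun s => |σ s| := by
      simpa only [Real.norm_eq_abs] using hσm.norm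
    exact (this.pow_const p).mul (hg.meas i)
  change volume {s : ℝ | s ∈ Set.Icc (0 : ℝ) 1 ∧ nfl t s = n ∧ σ s ≤ K ∧
      C * σ s < |σ s| ^ p * ρ i s} = 0
  set A := {s : ℝ | s ∈ Set.Icc (0 : ℝ) 1 ∧ nfl t s = n ∧ σ s ≤ K ∧
      C * σ s < |σ s| ^ p * ρ i s} with hA
  have hAm : MeasurableSet A := by
    refine measurableSet_Icc.inter (MeasurableSet.inter ?_ (MeasurableSet.inter ?_ ?_))
    · exact measurable_nfl t (measurableSet_singleton n)
    · exact measurableSet_le hσm measurable_const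
    · exact measurableSet_lt (hσm.const_mul C) hσpm
  have hAsub : A ⊆ Set.Icc 0 1 := fun s hs => hs.1
  set f : I → ℝ → ℝ := fun j x => if j ∈ F then A.indicator 1 (x + (n - t)) * τ j x else 0 with hf
  have hfm : ∀ j, Measurable (f j) := by
    intro j
    by_cases hj : j ∈ F
    · simp only [hf, hj, if_true]
      refine Measurable.mul ?_ (hτm j)
      exact (measurable_one.indicator hAm).comp (measurable_id.add_const _)
    · simp only [hf, hj, if_false]; exact measurable_const
  have hint : ∀ j ∈ F, ∫⁻ x, ENNReal.ofReal (|f j x| ^ p * ρ j x) ∂mu0 ≤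
      ∫⁻ s in A, ENNReal.ofReal (τ j (t + s - n)) := by
    intro j hj
    refine (lintegral_mono' Measure.restrict_le_self le_rfl).trans ?_
    rw [← lintegral_indicator hAm, ← lintegral_add_right_eq_self
      (fun s => A.indicator (fun s => ENNReal.ofReal (τ j (t + s - n))) s) ((n : ℝ) - t)]
    refine lintegral_mono fun x => ?_
    by_cases hx : x + (n - t) ∈ A
    · simp only [hf, hj, if_true, Set.indicator_of_mem hx, Pi.one_apply, one_mul]
      have e : t + (x + (n - t)) - n = x := by ring
      rw [e, abs_of_nonneg (hτ0 j x)]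
      refine ENNReal.ofReal_le_ofReal (le_of_eq ?_)
      simp only [hτ]
      have := hg.pos j x
      rw [← Real.rpow_mul this.le]
      nth_rewrite 2 [← Real.rpow_one (ρ j x)]
      rw [← Real.rpow_add this]
      congr 1
      field_simp
      ring
    · simp [hf, hj, Set.indicator_of_notMem hx, Real.zero_rpow hp0.ne']
  have hpf : pnorm ρ p f ≤ ∫⁻ s in A, ENNReal.ofReal (σ s) := by
    unfold pnorm
    rw [tsum_eq_sum (s := F) (by
      intro j hj
      simp [hf, hj, Real.zero_rpow hp0.ne'])]
    refine (Finset.sum_le_sum hint).trans (le_of_eq ?_)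
    have hmj : ∀ j ∈ F, Measurable fun s : ℝ => ENNReal.ofReal (τ j (t + s - n)) :=
      fun j _ => ((hτm j).comp hsh).ennreal_ofReal
    rw [← lintegral_finsetSum _ hmj]
    refine lintegral_congr fun s => ?_
    rw [hσ, ENNReal.ofReal_sum_of_nonneg fun j _ => hτ0 _ _]
  have hfin : ∫⁻ s in A, ENNReal.ofReal (σ s) < ⊤ := by
    calc ∫⁻ s in A, ENNReal.ofReal (σ s) ≤ ∫⁻ s in A, ENNReal.ofReal K :=
          setLIntegral_mono measurable_const fun s hs => ENNReal.ofReal_le_ofReal hs.2.2.1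
      _ = ENNReal.ofReal K * volume A := by rw [setLIntegral_const]
      _ < ⊤ := ENNReal.mul_lt_top ENNReal.ofReal_lt_top
          ((measure_mono hAsub).trans_lt (by simp))
  have hmem : memLprho ρ p f := ⟨fun j => (hfm j).aemeasurable, hpf.trans_lt hfin⟩
  have hT : ∀ s ∈ A, Tleft P f t i s = σ s := by
    intro s hs
    unfold Tleft
    rw [hs.2.1, tsum_subtype (Mset P n i) (fun j => f j (t + s - (n : ℝ))),
      tsum_eq_sum (s := F)]
    · refine Finset.sum_congr rfl fun j hj => ?_
      rw [Set.indicator_of_mem (hF j hj)]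
      have e : t + s - n + (n - t) = s := by ring
      simp [hf, hj, e, hs]
    · intro j hj
      simp [hf, hj]
  have hlow : ∫⁻ s in A, ENNReal.ofReal (|σ s| ^ p * ρ i s) ≤ pnorm ρ p (Tleft P f t) := by
    refine le_trans ?_ (ENNReal.le_tsum i)
    refine le_trans (le_of_eq ?_) (lintegral_mono_set hAsub)
    refine setLIntegral_congr_fun hAm fun s hs => ?_
    simp only [hT s hs]
  by_contra hvol
  have hstrict := setLIntegral_strict_mono (μ := volume) (s := A)
    (f := fun s => ENNReal.ofReal C * ENNReal.ofReal (σ s))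
    (g := fun s => ENNReal.ofReal (|σ s| ^ p * ρ i s)) hAm hvol hσpm.ennreal_ofReal
    (by
      rw [lintegral_const_mul' _ _ ENNReal.ofReal_ne_top]
      exact (ENNReal.mul_lt_top ENNReal.ofReal_lt_top hfin).ne)
    (Eventually.of_forall fun s hs => by
      rw [← ENNReal.ofReal_mul hC0]
      exact (ENNReal.ofReal_lt_ofReal_iff_of_nonneg (mul_nonneg hC0 (hσ0 s))).2 hs.2.2.2)
  rw [lintegral_const_mul' _ _ ENNReal.ofReal_ne_top] at hstrict
  refine absurd (hlow.trans (hb f hmem)) (not_le.2 (lt_of_le_of_lt ?_ hstrict))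
  gcongr

lemma cond_of_bound [Countable I] {P : I → Option I} {ρ : I → ℝ → ℝ} (hg : Good ρ) {p C t : ℝ}
    (hp : 1 < p) (hC0 : 0 ≤ C)
    (hb : ∀ f, memLprho ρ p f → pnorm ρ p (Tleft P f t) ≤ ENNReal.ofReal C * pnorm ρ p f) :
    Cond P ρ p C t := by
  classical
  intro i
  have hp0 : 0 < p := by linarith
  have hp1 : 0 < p - 1 := by linarith
  have h1 : ∀ᵐ s ∂mu0, ∀ (n : ℕ) (F : Finset I) (K : ℕ), (∀ j ∈ F, j ∈ Mset P n i) →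
      ¬ (s ∈ Set.Icc (0 : ℝ) 1 ∧ nfl t s = n ∧
      ∑ j ∈ F, ρ j (t + s - n) ^ (-(1 / (p - 1))) ≤ K ∧
      C * ∑ j ∈ F, ρ j (t + s - n) ^ (-(1 / (p - 1))) <
        |∑ j ∈ F, ρ j (t + s - n) ^ (-(1 / (p - 1)))| ^ p * ρ i s) := by
    rw [ae_all_iff]; intro n
    rw [ae_all_iff]; intro F
    rw [ae_all_iff]; intro K
    by_cases hF : ∀ j ∈ F, j ∈ Mset P n i
    · have h0 := core_null hg hp hC0 hb i n F hF K
      have h2 : ∀ᵐ s ∂(volume : Measure ℝ), ¬ _ := measure_eq_zero_iff_ae_notMem.1 h0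
      filter_upwards [ae_restrict_of_ae h2] with s hs _ using hs
    · exact Eventually.of_forall fun s h => absurd h hF
  filter_upwards [h1, mu0_mem] with s hs hs01
  rw [← ENNReal.le_rpow_inv_iff hp1, ENNReal.tsum_eq_iSup_sum]
  refine iSup_le fun F' => ?_
  rw [ENNReal.le_rpow_inv_iff hp1]
  obtain ⟨K, hK⟩ := exists_nat_ge (∑ j ∈ F'.map (Function.Embedding.subtype _),
    ρ j (t + s - nfl t s) ^ (-(1 / (p - 1))))
  have h2 := hs (nfl t s) (F'.map (Function.Embedding.subtype _)) K (by simp; tauto)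
  have h3 := not_lt.1 (fun h => h2 ⟨hs01, rfl, hK, h⟩)
  rw [Finset.sum_map] at h3
  simp only [Function.Embedding.subtype_apply] at h3
  rw [← ENNReal.ofReal_sum_of_nonneg (fun j _ => Real.rpow_nonneg (hg.pos _ _).le _)]
  have hσ0 : 0 ≤ ∑ j ∈ F', ρ (j : I) (t + s - nfl t s) ^ (-(1 / (p - 1))) :=
    Finset.sum_nonneg fun j _ => Real.rpow_nonneg (hg.pos _ _).le _
  set x := ∑ j ∈ F', ρ (j : I) (t + s - nfl t s) ^ (-(1 / (p - 1)))
  rw [ENNReal.ofReal_rpow_of_nonneg hσ0 hp1.le]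
  refine ENNReal.ofReal_le_ofReal ?_
  have hpos := hg.pos i s
  rw [le_div_iff₀ hpos]
  rcases hσ0.eq_or_lt with h | h
  · rw [← h, Real.zero_rpow hp1.ne', zero_mul]; exact hC0
  · rw [abs_of_pos h] at h3
    have e : x ^ p = x ^ (p - 1) * x := by
      rw [Real.rpow_sub_one h.ne']; field_simp
    rw [e] at h3
    refine le_of_mul_le_mul_right ?_ h
    linarith

lemma cond_mono {P : I → Option I} {ρ : I → ℝ → ℝ} (hg : Good ρ) {p C C' t : ℝ} (h : C ≤ C')
    (hC : Cond P ρ p C t) : Cond P ρ p C' t := by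
  intro i
  filter_upwards [hC i] with s hs
  have := hg.pos i s
  exact hs.trans (by gcongr)

lemma const_pow {M : ℝ} (hM : 1 ≤ M) (w t p : ℝ) (hp : 1 < p) :
    ENNReal.ofReal (M * Real.exp (w * t)) ^ p = ENNReal.ofReal (M ^ p * Real.exp (p * w * t)) := by
  rw [ENNReal.ofReal_rpow_of_nonneg (by positivity) (by linarith),
    Real.mul_rpow (by positivity) (by positivity), ← Real.exp_mul]
  congr 3; ring

lemma bound_iff {ρ : I → ℝ → ℝ} {M : ℝ} (hM : 1 ≤ M) (w t p : ℝ) (hp : 1 < p)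
    (f g : I → ℝ → ℝ) :
    enorm' ρ p g ≤ ENNReal.ofReal (M * Real.exp (w * t)) * enorm' ρ p f ↔
      pnorm ρ p g ≤ ENNReal.ofReal (M ^ p * Real.exp (p * w * t)) * pnorm ρ p f := by
  have hp0 : 0 < p := by linarith
  unfold enorm'
  rw [← const_pow hM w t p hp, ← ENNReal.rpow_le_rpow_iff hp0,
    ENNReal.mul_rpow_of_nonneg _ _ hp0.le, ← ENNReal.rpow_mul, ← ENNReal.rpow_mul,
    one_div_mul_cancel hp0.ne', ENNReal.rpow_one, ENNReal.rpow_one]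

lemma main_good [Countable I] (P : I → Option I) (ρ : I → ℝ → ℝ) (hg : Good ρ) (M w : ℝ)
    (hM : 1 ≤ M) (p : ℝ) (hp : 1 < p) :
    C0SemigroupBound P ρ p M w ↔ ∀ t ≥ 0, Cond P ρ p (M ^ p * Real.exp (p * w * t)) t := by
  have hp0 : 0 < p := by linarith
  constructor
  · rintro ⟨-, h, -⟩ t ht
    exact cond_of_bound hg hp (by positivity) fun f hf => (bound_iff hM w t p hp _ _).1 (h t ht f hf)
  · intro h
    refine ⟨fun t ht f hf => mem_T hg hp ht (h t ht) hf, fun t ht f hf =>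
      (bound_iff hM w t p hp _ _).2 (pnorm_T_le hg hp ht (h t ht) hf.1), fun f _ => ?_,
      fun t ht u hu f hf => ?_, fun f hf t ht => ?_⟩
    · unfold pdist enorm'
      rw [pnorm_zero' hp (T_zero P f), ENNReal.zero_rpow_of_pos (by positivity)]
    · unfold pdist enorm'
      rw [pnorm_zero' hp (T_add hg hp ht hu (h _ (by positivity)) hf),
        ENNReal.zero_rpow_of_pos (by positivity)]
    · have := cont_all (P := P) hg hp (fun R => ⟨M ^ p * Real.exp (p * |w| * R), fun t ht htR =>
        cond_mono hg (by
          gcongr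
          exact le_abs_self w) (h t ht)⟩) hf t ht
      unfold pdist enorm'
      have h2 := this.ennrpow_const (1 / p)
      rwa [ENNReal.zero_rpow_of_pos (by positivity)] at h2

/-- **Proposition 2.2 (b)**.  Let `ρ` be a weight on the directed metric tree `L(G)`,
`M ≥ 1`, `w ∈ ℝ`, and `1 < p < ∞`.  The left translations `{T_t}_{t ≥ 0}` form a
`C₀`-semigroup of bounded operators on `L^p_ρ(L(G))` with `‖T_t‖ ≤ M e^{wt}` for all `t ≥ 0`
if and only if for all `i ∈ I`, all `t ≥ 0` and almost every `s ∈ [0,1]`,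
`(∑_{j ∈ M_{n(t,s)}(i)} ρ_j(s + t - n(t,s))^{-1/(p-1)})^{p-1} ≤ M^p e^{pwt} / ρ_i(s)`
(the left-hand side being `0` when `M_{n(t,s)}(i)` is empty). -/
theorem c0SemigroupBound_iff_weight_Lp {I : Type*} [Countable I] [Nonempty I]
    (P : I → Option I) (ρ : I → ℝ → ℝ) (hρ : IsWeight ρ) (M w : ℝ) (hM : 1 ≤ M)
    (p : ℝ) (hp : 1 < p) :
    C0SemigroupBound P ρ p M w ↔
      ∀ i, ∀ t ≥ (0 : ℝ), ∀ᵐ s ∂(volume.restrict (Set.Icc (0 : ℝ) 1)),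
        (∑' j : Mset P (nfl t s) i,
            ENNReal.ofReal ((ρ (j : I) (s + t - (nfl t s : ℝ))) ^ (-(1 / (p - 1))))) ^ (p - 1)
          ≤ ENNReal.ofReal (M ^ p * Real.exp (p * w * t) / ρ i s) := by
  classical
  have hm : ∀ i, AEMeasurable (ρ i) mu0 := fun i => (hρ.integrable i).aemeasurable
  set ρ' : I → ℝ → ℝ := fun i s => if 0 < (hm i).mk _ s then (hm i).mk _ s else 1 with hρ'
  have hae : ∀ i, ∀ᵐ s ∂mu0, ρ i s = ρ' i s := by
    intro i
    filter_upwards [(hm i).ae_eq_mk, hρ.pos i] with s h1 h2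
    rw [h1] at h2
    simp only [hρ', h2, if_true, h1]
  have hg : Good ρ' := by
    refine ⟨fun i => ?_, fun i s => ?_, fun i => ?_⟩
    · have h1 := (hm i).measurable_mk
      exact Measurable.ite (measurableSet_lt measurable_const h1) h1 measurable_const
    · simp only [hρ']
      split_ifs with h
      · exact h
      · exact one_pos
    · exact (hρ.integrable i).congr (hae i)
  have hpn : ∀ f, pnorm ρ p f = pnorm ρ' p f := by
    intro f
    unfold pnorm
    refine tsum_congr fun i => lintegral_congr_ae ?_
    filter_upwards [hae i] with s hs
    rw [hs]
  have e1 : C0SemigroupBound P ρ p M w ↔ C0SemigroupBound P ρ' p M w := by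
    simp only [C0SemigroupBound, memLprho, pdist, enorm', hpn]
  rw [e1, main_good P ρ' hg M w hM p hp, forall_comm]
  refine forall_congr' fun t => ?_
  rw [forall_comm]
  refine forall_congr' fun ht => forall_congr' fun i => ?_
  have h1 : ∀ᵐ s ∂mu0, ∀ j, ρ j (t + s - (nfl t s : ℝ)) = ρ' j (t + s - (nfl t s : ℝ)) :=
    ae_shift t ht (ae_all_iff.2 hae)
  refine eventually_congr ?_
  filter_upwards [h1, hae i] with s h2 h3
  simp only [add_comm s t, h2, h3]

end
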